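/- arXiv:2009.10635 — 3 statements merged into one kernel-verified Lean document; each statement's English description precedes it below -/
import Mathlib

section
/- Let μ be an s-graphon and let f ∈ FDC be a continuous fairly distributed function with C = sup f. Let ε > 0 and let k ∈ ℕ be such that |f(x,y) − f(x',y')| < ε whenever |x − x'| ≤ 1/k and |y − y'| ≤ 1/k. Let I_1,…,I_k be the intervals I_i = [(i−1)/k, i/k) for i < k and I_k = [(k−1)/k, 1], and define f_i(x) = k ∫_{(u,v) ∈ I_j × I_i} f(u,v) dλ²(u,v) for x ∈ I_j (i,j = 1,…,k), and M(i,j) = ∫_{[0,1]²} f_i(x) f_j(y) dμ(x,y). Then for all i,j = 1,…,k and all (u,v) ∈ I_i × I_j, |k²·M(i,j) − φ(f,μ)(u,v)| ≤ 2Cε. -/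
open MeasureTheory Topology Filter

noncomputable section

/-- The unit square `[0,1]²`. -/
abbrev Sq : Type := unitInterval × unitInterval

/-- Convergence of a sequence of subsets in the Vietoris topology
(upper + lower Vietoris convergence). -/
def VietorisTendsto {X : Type*} [TopologicalSpace X] (A : ℕ → Set X) (B : Set X) : Prop :=
  (∀ U : Set X, IsOpen U → B ⊆ U → ∀ᶠ n in atTop, A n ⊆ U) ∧
  (∀ U : Set X, IsOpen U → (B ∩ U).Nonempty → ∀ᶠ n in atTop, (A n ∩ U).Nonempty)

/-- A measure on the unit square is symmetric if it is invariant under the coordinate swap. -/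
def IsSymmSq (μ : Measure Sq) : Prop := μ.map Prod.swap = μ

/-- s-graphons: symmetric Borel probability measures on the unit square,
with the weak topology. -/
def SGraphon : Type := {μ : ProbabilityMeasure Sq // IsSymmSq (μ : Measure Sq)}

instance : TopologicalSpace SGraphon :=
  inferInstanceAs (TopologicalSpace {μ : ProbabilityMeasure Sq // IsSymmSq (μ : Measure Sq)})

/-- The underlying measure of an s-graphon. -/
def SGraphon.toMeasure (μ : SGraphon) : Measure Sq := (μ.1 : Measure Sq)

/-- A non-negative bounded Borel function on the unit square is fairly distributed
if all its horizontal and vertical sections integrate (w.r.t. Lebesgue measure) to 1. -/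
structure FairlyDistributed (f : Sq → ℝ) : Prop where
  measurable : Measurable f
  nonneg : ∀ p, 0 ≤ f p
  bounded : ∃ C : ℝ, ∀ p, f p ≤ C
  row : ∀ x : unitInterval, ∫ v, f (x, v) = 1
  col : ∀ y : unitInterval, ∫ u, f (u, y) = 1

/-- The density `φ(f,μ)`. -/
def phiFn (f : Sq → ℝ) (μ : Measure Sq) (p : Sq) : ℝ :=
  ∫ q, f (q.1, p.1) * f (q.2, p.2) ∂μ

/-- The measure `Φ(f,μ)`, with density `φ(f,μ)` w.r.t. 2-dimensional Lebesgue measure. -/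
def PhiMeas (f : Sq → ℝ) (μ : Measure Sq) : Measure Sq :=
  volume.withDensity fun p => ENNReal.ofReal (phiFn f μ p)

/-- The shape of a measure `μ` on the unit square: the weak closure of the set of
(s-graphons corresponding to) the measures `Φ(f,μ)`, `f` continuous fairly distributed. -/
def shapeM (μ : Measure Sq) : Set SGraphon :=
  closure {ν : SGraphon | ∃ f : Sq → ℝ, FairlyDistributed f ∧ Continuous f ∧
    ν.toMeasure = PhiMeas f μ}

/-- The shape `C(μ)` of an s-graphon. -/
def shape (μ : SGraphon) : Set SGraphon := shapeM μ.toMeasure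

/-- A fractional partition into `k` parts: non-negative Borel functions on `[0,1]`
summing to the constant function 1, each integrating to `1/k`. -/
def IsFracPartition (k : ℕ) (f : Fin k → unitInterval → ℝ) : Prop :=
  (∀ i, Measurable (f i)) ∧ (∀ i x, 0 ≤ f i x) ∧ (∀ x, ∑ i, f i x = 1) ∧
    ∀ i, ∫ x, f i x = 1 / k

/-- The `k`-shape `C(μ,k)`: the closure in `ℝ^{k×k}` of the set of density matrices of
fractional partitions into `k` parts. -/
def kShape (μ : Measure Sq) (k : ℕ) : Set (Matrix (Fin k) (Fin k) ℝ) :=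
  closure {M | ∃ f : Fin k → unitInterval → ℝ, IsFracPartition k f ∧
    ∀ i j, M i j = ∫ p, f i p.1 * f j p.2 ∂μ}

/-- `M_k^*`: symmetric `k×k` matrices with non-negative entries summing to 1. -/
def Mstar (k : ℕ) : Set (Matrix (Fin k) (Fin k) ℝ) :=
  {M | M.IsSymm ∧ (∀ i j, 0 ≤ M i j) ∧ ∑ i, ∑ j, M i j = 1}

/-- The index `i` (0-based) with `u ∈ [i/k, (i+1)/k)` (and `i = k-1` for `u = 1`). -/
def gridIdx (k : ℕ) (hk : 0 < k) (u : unitInterval) : Fin k :=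
  ⟨min ⌊(u : ℝ) * k⌋₊ (k - 1), lt_of_le_of_lt (min_le_right _ _) (Nat.sub_lt hk one_pos)⟩

/-- The measure `μ_M` associated to a `k×k` matrix `M`: its density w.r.t. 2-dimensional
Lebesgue measure equals `k² M(i,j)` on the square `[i/k,(i+1)/k) × [j/k,(j+1)/k)` (0-based). -/
def muM {k : ℕ} (M : Matrix (Fin k) (Fin k) ℝ) : Measure Sq :=
  if hk : 0 < k then
    volume.withDensity fun p =>
      ENNReal.ofReal ((k : ℝ) ^ 2 * M (gridIdx k hk p.1) (gridIdx k hk p.2))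
  else 0

/-- `C̃(μ,k)`: the `k`-shape of `μ`, interpreted as a set of s-graphons. -/
def kShapeTilde (μ : Measure Sq) (k : ℕ) : Set SGraphon :=
  {ν : SGraphon | ∃ M ∈ kShape μ k, ν.toMeasure = muM M}

/-- The interval `I_i = [i/k, (i+1)/k)` (0-based), with `I_{k-1} = [(k-1)/k, 1]`,
as a subset of `[0,1]`. -/
def Ik (k : ℕ) (i : Fin k) : Set unitInterval :=
  if (i : ℕ) + 1 = k then Subtype.val ⁻¹' Set.Icc (((i : ℕ) : ℝ) / k) 1
  else Subtype.val ⁻¹' Set.Ico (((i : ℕ) : ℝ) / k) ((((i : ℕ) : ℝ) + 1) / k)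

/-!
For `x ∈ I_j` the number `k f_i(x)` is the average of `f` over the grid cell `I_j × I_i`. Replacing
`f` by its cell averages therefore gives a function `f_k` for which `k² M(i,j) = φ(f_k,μ)(u,v)`
whenever `(u,v) ∈ I_i × I_j`. Averaging over a cell moves `f` by at most its oscillation there and
keeps it bounded by `C`, while `φ(·,μ)` is quadratic, hence Lipschitz with constant `2C` in the
supremum norm on functions bounded by `C`.
-/

section SetAverage

variable {α E : Type*} [MeasurableSpace α] [NormedAddCommGroup E] [NormedSpace ℝ E]
  [CompleteSpace E]

lemma norm_setAverage_sub_le {ν : Measure α} {s : Set α} {f : α → E} {c : E} {r : ℝ}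
    (hs₀ : ν s ≠ 0) (hs_top : ν s ≠ ⊤) (hf : IntegrableOn f s ν)
    (hfr : ∀ᵐ x ∂ν.restrict s, ‖f x - c‖ ≤ r) : ‖⨍ x in s, f x ∂ν - c‖ ≤ r := by
  simp only [← mem_closedBall_iff_norm] at hfr ⊢
  exact (convex_closedBall c r).set_average_mem Metric.isClosed_closedBall hs₀ hs_top hfr hf

end SetAverage

instance SGraphon.instIsProbabilityMeasure (μ : SGraphon) : IsProbabilityMeasure μ.toMeasure :=
  inferInstanceAs (IsProbabilityMeasure (μ.1 : Measure Sq))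

section Phi

variable {μ : Measure Sq} [IsFiniteMeasure μ] {f g : Sq → ℝ} {C ε : ℝ}

lemma integrable_phiFn_integrand (hf : Measurable f) (hfC : ∀ p, |f p| ≤ C) (p : Sq) :
    Integrable (fun q : Sq => f (q.1, p.1) * f (q.2, p.2)) μ := by
  refine Integrable.of_bound (by fun_prop) (C * C) (ae_of_all _ fun q => ?_)
  rw [norm_mul]
  exact mul_le_mul (hfC _) (hfC _) (norm_nonneg _) ((abs_nonneg _).trans (hfC p))

lemma abs_phiFn_sub_phiFn_le (hf : Measurable f) (hg : Measurable g) (hfC : ∀ p, |f p| ≤ C)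
    (hgC : ∀ p, |g p| ≤ C) (hfg : ∀ p, |f p - g p| ≤ ε) (p : Sq) :
    |phiFn f μ p - phiFn g μ p| ≤ 2 * C * ε * μ.real Set.univ := by
  rw [phiFn, phiFn, ← integral_sub (integrable_phiFn_integrand hf hfC p)
    (integrable_phiFn_integrand hg hgC p), ← Real.norm_eq_abs]
  refine norm_integral_le_of_norm_le_const (ae_of_all _ fun q => ?_)
  rw [Real.norm_eq_abs]
  have hC : 0 ≤ C := (abs_nonneg _).trans (hfC p)
  have hε : 0 ≤ ε := (abs_nonneg _).trans (hfg p)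
  set a := (q.1, p.1)
  set b := (q.2, p.2)
  calc |f a * f b - g a * g b|
      = |f a * (f b - g b) + (f a - g a) * g b| := by congr 1; ring
    _ ≤ |f a| * |f b - g b| + |f a - g a| * |g b| := by
        simpa only [abs_mul] using abs_add_le (f a * (f b - g b)) ((f a - g a) * g b)
    _ ≤ C * ε + ε * C := by gcongr; exacts [hfC a, hfg b, hfg a, hgC b]
    _ = 2 * C * ε := by ring

end Phi

section Grid

variable {k : ℕ}

lemma exists_Ik_eq_Icc_or_Ico (i : Fin k) : ∃ a b : unitInterval,
    (b : ℝ) - a = 1 / k ∧ (Ik k i = Set.Icc a b ∨ Ik k i = Set.Ico a b) := by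
  have hk : (0 : ℝ) < k := by exact_mod_cast i.pos
  have hi : (i : ℝ) + 1 ≤ k := by exact_mod_cast i.isLt
  refine ⟨⟨i / k, by positivity, (div_le_one hk).2 (by linarith)⟩,
    ⟨(i + 1) / k, by positivity, (div_le_one hk).2 hi⟩, by ring, ?_⟩
  unfold Ik
  split_ifs with hlast
  · have hend : ((i : ℝ) + 1) / k = 1 := by
      rw [div_eq_one_iff_eq hk.ne']
      exact_mod_cast hlast
    simp only [hend]
    exact Or.inl rfl
  · exact Or.inr rfl

lemma measurableSet_Ik (i : Fin k) : MeasurableSet (Ik k i) := by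
  obtain ⟨a, b, -, h | h⟩ := exists_Ik_eq_Icc_or_Ico i
  · exact h ▸ measurableSet_Icc
  · exact h ▸ measurableSet_Ico

lemma volume_Ik (i : Fin k) : volume (Ik k i) = ENNReal.ofReal (1 / k) := by
  obtain ⟨a, b, hab, h | h⟩ := exists_Ik_eq_Icc_or_Ico i
  · rw [h, unitInterval.volume_Icc, hab]
  · rw [h, unitInterval.volume_Ico, hab]

lemma abs_sub_le_of_mem_Ik {i : Fin k} {x y : unitInterval} (hx : x ∈ Ik k i)
    (hy : y ∈ Ik k i) : |(x : ℝ) - y| ≤ 1 / k := by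
  obtain ⟨a, b, hab, h⟩ := exists_Ik_eq_Icc_or_Ico i
  have hsub : Ik k i ⊆ Set.Icc a b :=
    h.elim (fun h => h.subset) fun h => h.subset.trans Set.Ico_subset_Icc_self
  exact hab ▸ Real.dist_le_of_mem_Icc (hsub hx) (hsub hy)

variable (hk : 0 < k)

lemma mem_Ik_iff_gridIdx_eq {i : Fin k} {x : unitInterval} :
    x ∈ Ik k i ↔ gridIdx k hk x = i := by
  have hk' : (0 : ℝ) < k := by exact_mod_cast hk
  have hx : 0 ≤ (x : ℝ) * k := mul_nonneg x.2.1 hk'.le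
  have hle : (i : ℝ) / k ≤ x ↔ (i : ℕ) ≤ ⌊(x : ℝ) * k⌋₊ := by
    rw [div_le_iff₀ hk', Nat.le_floor_iff hx]
  have hlt : (x : ℝ) < (i + 1) / k ↔ ⌊(x : ℝ) * k⌋₊ < i + 1 := by
    rw [lt_div_iff₀ hk', Nat.floor_lt hx, Nat.cast_add_one]
  have hi : (i : ℕ) < k := i.isLt
  simp only [gridIdx, Fin.ext_iff]
  unfold Ik
  split_ifs with hlast
  · simp only [Set.mem_preimage, Set.mem_Icc, hle, x.2.2, and_true]
    omega
  · simp only [Set.mem_preimage, Set.mem_Ico, hle, hlt]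
    omega

lemma mem_Ik_gridIdx (x : unitInterval) : x ∈ Ik k (gridIdx k hk x) :=
  (mem_Ik_iff_gridIdx_eq hk).2 rfl

lemma measurable_gridIdx : Measurable (gridIdx k hk) := by
  refine measurable_to_countable' fun i => ?_
  convert measurableSet_Ik i
  ext x
  exact (mem_Ik_iff_gridIdx_eq hk).symm

/-- The cell `I_i × I_j` of the `k × k` grid that contains the point `p`. -/
def gridCell (p : Sq) : Set Sq := Ik k (gridIdx k hk p.1) ×ˢ Ik k (gridIdx k hk p.2)

lemma measurableSet_gridCell (p : Sq) : MeasurableSet (gridCell hk p) :=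
  (measurableSet_Ik _).prod (measurableSet_Ik _)

lemma volume_gridCell (p : Sq) :
    volume (gridCell hk p) = ENNReal.ofReal (1 / k) * ENNReal.ofReal (1 / k) := by
  rw [gridCell, Measure.volume_eq_prod, Measure.prod_prod, volume_Ik, volume_Ik]

lemma volume_gridCell_ne_zero (p : Sq) : volume (gridCell hk p) ≠ 0 := by
  have : 0 < ENNReal.ofReal (1 / k) := ENNReal.ofReal_pos.2 (by positivity)
  rw [volume_gridCell]
  exact mul_ne_zero this.ne' this.ne'

lemma abs_sub_le_of_mem_gridCell {p q : Sq} (hq : q ∈ gridCell hk p) :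
    |(q.1 : ℝ) - p.1| ≤ 1 / k ∧ |(q.2 : ℝ) - p.2| ≤ 1 / k :=
  ⟨abs_sub_le_of_mem_Ik hq.1 (mem_Ik_gridIdx hk p.1),
    abs_sub_le_of_mem_Ik hq.2 (mem_Ik_gridIdx hk p.2)⟩

/-- The step function obtained from `f` by averaging over the cells of the `k × k` grid. In terms
of the fractional partition `f_1, …, f_k` attached to `f`, its value at `(x, u)` is `k f_i(x)` for
`u ∈ I_i`. -/
def gridAverage (f : Sq → ℝ) (p : Sq) : ℝ := ⨍ q in gridCell hk p, f q

lemma gridAverage_eq_of_mem_Ik (f : Sq → ℝ) {i : Fin k} {u : unitInterval} (hu : u ∈ Ik k i)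
    (x : unitInterval) : gridAverage hk f (x, u) =
      k * (k * ∫ q in Ik k (gridIdx k hk x) ×ˢ Ik k i, f q) := by
  have hvol : volume.real (gridCell hk (x, u)) = 1 / k * (1 / k) := by
    rw [measureReal_def, volume_gridCell, ENNReal.toReal_mul, ENNReal.toReal_ofReal (by positivity)]
  rw [gridAverage, setAverage_eq, hvol, gridCell, (mem_Ik_iff_gridIdx_eq hk).1 hu, smul_eq_mul,
    mul_inv, one_div, inv_inv, mul_assoc]

lemma measurable_gridAverage (f : Sq → ℝ) : Measurable (gridAverage hk f) := by
  have hfactor : gridAverage hk f =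
      (fun c : Fin k × Fin k => ⨍ q in Ik k c.1 ×ˢ Ik k c.2, f q) ∘
        fun p => (gridIdx k hk p.1, gridIdx k hk p.2) := rfl
  rw [hfactor]
  exact (measurable_of_finite _).comp <|
    ((measurable_gridIdx hk).comp measurable_fst).prodMk
      ((measurable_gridIdx hk).comp measurable_snd)

lemma abs_gridAverage_sub_le {f : Sq → ℝ} {p : Sq} {c r : ℝ}
    (hf : IntegrableOn f (gridCell hk p)) (hfr : ∀ q ∈ gridCell hk p, |f q - c| ≤ r) :
    |gridAverage hk f p - c| ≤ r :=
  norm_setAverage_sub_le (volume_gridCell_ne_zero hk p) (measure_ne_top _ _) hf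
    (ae_restrict_of_forall_mem (measurableSet_gridCell hk p) hfr)

lemma phiFn_gridAverage (f : Sq → ℝ) (μ : Measure Sq) {i j : Fin k} {u v : unitInterval}
    (hu : u ∈ Ik k i) (hv : v ∈ Ik k j) :
    phiFn (gridAverage hk f) μ (u, v) = (k : ℝ) ^ 2 *
      ∫ p, ((k : ℝ) * ∫ q in Ik k (gridIdx k hk p.1) ×ˢ Ik k i, f q) *
        ((k : ℝ) * ∫ q in Ik k (gridIdx k hk p.2) ×ˢ Ik k j, f q) ∂μ := by
  simp only [phiFn, gridAverage_eq_of_mem_Ik hk f hu, gridAverage_eq_of_mem_Ik hk f hv]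
  rw [← integral_const_mul]
  congr 1 with p
  ring

end Grid

theorem stmt13_general (μ : Measure Sq) [IsProbabilityMeasure μ] (f : Sq → ℝ) (hf : Measurable f)
    (C : ℝ) (hC : ∀ p, |f p| ≤ C) (ε : ℝ) (k : ℕ) (hk : 0 < k)
    (hmod : ∀ x x' y y' : unitInterval, |(x : ℝ) - (x' : ℝ)| ≤ 1 / k →
      |(y : ℝ) - (y' : ℝ)| ≤ 1 / k → |f (x, y) - f (x', y')| ≤ ε) :
    ∀ i j : Fin k, ∀ u ∈ Ik k i, ∀ v ∈ Ik k j,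
      |(k : ℝ) ^ 2 *
          (∫ p, ((k : ℝ) * ∫ q in Ik k (gridIdx k hk p.1) ×ˢ Ik k i, f q) *
            ((k : ℝ) * ∫ q in Ik k (gridIdx k hk p.2) ×ˢ Ik k j, f q) ∂μ) -
        phiFn f μ (u, v)| ≤ 2 * C * ε := by
  intro i j u hu v hv
  have hint : Integrable f := .of_bound hf.aestronglyMeasurable C (ae_of_all _ hC)
  have hbound (p : Sq) : |gridAverage hk f p| ≤ C := by
    simpa only [sub_zero] using abs_gridAverage_sub_le hk (c := 0) hint.integrableOn
      fun q _ => (sub_zero (f q)).symm ▸ hC q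
  have happrox (p : Sq) : |gridAverage hk f p - f p| ≤ ε :=
    abs_gridAverage_sub_le hk hint.integrableOn fun q hq =>
      hmod _ _ _ _ (abs_sub_le_of_mem_gridCell hk hq).1 (abs_sub_le_of_mem_gridCell hk hq).2
  rw [← phiFn_gridAverage hk f μ hu hv]
  simpa only [probReal_univ, mul_one] using
    abs_phiFn_sub_phiFn_le (μ := μ) (measurable_gridAverage hk f) hf hbound hC happrox (u, v)

/-- Let `μ` be an s-graphon, `f` a continuous fairly distributed function
bounded by `C`, and `ε > 0`, `k ∈ ℕ` such that `f` oscillates by less than `ε` on squares of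
side `1/k`. With `f_i(x) = k ∫_{I_j × I_i} f dλ²` for `x ∈ I_j` and
`M(i,j) = ∫ f_i(x) f_j(y) dμ(x,y)`, we have
`|k² M(i,j) − φ(f,μ)(u,v)| ≤ 2Cε` for all `(u,v) ∈ I_i × I_j`. -/
theorem stmt13 (μ : SGraphon) (f : Sq → ℝ) (hf : FairlyDistributed f) (hfc : Continuous f)
    (C : ℝ) (hC : ∀ p, f p ≤ C) (ε : ℝ) (hε : 0 < ε) (k : ℕ) (hk : 0 < k)
    (hmod : ∀ x x' y y' : unitInterval, |(x : ℝ) - (x' : ℝ)| ≤ 1 / k →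
      |(y : ℝ) - (y' : ℝ)| ≤ 1 / k → |f (x, y) - f (x', y')| < ε) :
    ∀ i j : Fin k, ∀ u ∈ Ik k i, ∀ v ∈ Ik k j,
      |(k : ℝ) ^ 2 *
          (∫ p, ((k : ℝ) * ∫ q in Ik k (gridIdx k hk p.1) ×ˢ Ik k i, f q) *
            ((k : ℝ) * ∫ q in Ik k (gridIdx k hk p.2) ×ˢ Ik k j, f q) ∂μ.toMeasure) -
        phiFn f μ.toMeasure (u, v)| ≤ 2 * C * ε := by
  exact stmt13_general μ.toMeasure f hf.measurable C
    (fun p => (abs_of_nonneg (hf.nonneg p)).trans_le (hC p)) ε k hk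
    fun x x' y y' hx hy => (hmod x x' y y' hx hy).le

end
end

section
/- Every sequence {ν_n} of s-graphons has a subsequence {ν_{n_j}} and an s-graphon ν such that, for every k ∈ ℕ, the k-shapes C(ν_{n_j}, k) converge to C(ν,k) in the Vietoris topology on the hyperspace of compact subsets of ℝ^{k×k}; equivalently, the topology on isomorphism classes of s-graphons induced by the maps [ν] ↦ C(ν,k), k ∈ ℕ, is compact. -/
open MeasureTheory Topology Filter

noncomputable section

/-! For every `k` and every basic open set `V` of matrices, choose a fractional partition whose
density matrix for `ν n` lies in `V` whenever `C(ν n, k)` meets `V`. The map sending a point of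
`[0,1]` to itself together with the values of all these partitions embeds `[0,1]` into a compact
metrizable space on which the chosen partitions extend to continuous functions independent of `n`.
Push Lebesgue measure and `ν n` forward to this space and its square, and pass to weak limits
`m` and `μ` along a subsequence.

Lower convergence: a fair partition for `m` is almost everywhere a limit of continuous ones; these
are almost fair for all nearby measures, and mixing in a small constant makes them fair. Upper
convergence: by compactness, if the shapes do not eventually enter a neighbourhood of the limit
shape, they infinitely often meet a basic open `V` whose closure avoids the limit shape; but the
partition chosen for `V` is continuous, so its density matrices, infinitely often in `V`, converge
to an element of the limit shape.

Finally, `m` projects onto Lebesgue measure, hence has no atoms, so an injective Borel map into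
`[0,1]` carries it to Lebesgue measure; injectivity ensures that the shapes do not change. -/

section Embedding

theorem volume_cantorSet : volume cantorSet = 0 := by
  have volume_third (c : ℝ) :
      volume (AffineMap.homothety c (1 / 3 : ℝ) '' cantorSet) = 3⁻¹ * volume cantorSet := by
    rw [Measure.addHaar_image_homothety]
    simp [abs_of_pos, ENNReal.ofReal_inv_of_pos]
  have halves : cantorSet = AffineMap.homothety (0 : ℝ) (1 / 3 : ℝ) '' cantorSet ∪
      AffineMap.homothety (1 : ℝ) (1 / 3 : ℝ) '' cantorSet := by
    convert cantorSet_eq_union_halves using 3 <;>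
      simp only [AffineMap.homothety_apply, vsub_eq_sub, smul_eq_mul, vadd_eq_add] <;> ring
  have finite : volume cantorSet ≠ ⊤ :=
    ((measure_mono cantorSet_subset_unitInterval).trans_lt measure_Icc_lt_top).ne
  have contraction : volume.real cantorSet ≤ 2 / 3 * volume.real cantorSet :=
    calc volume.real cantorSet
      _ ≤ _ := (congrArg volume.real halves).le.trans (measureReal_union_le _ _)
      _ = 2 / 3 * volume.real cantorSet := by
        simp only [measureReal_def, volume_third, ENNReal.toReal_mul, ENNReal.toReal_inv,
          ENNReal.toReal_ofNat]
        ring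
  refine (measureReal_eq_zero_iff finite).1 (le_antisymm ?_ measureReal_nonneg)
  linarith

theorem exists_measurable_injective_mem_cantorSet (X : Type*) [MeasurableSpace X]
    [MeasurableSpace.CountablySeparated X] :
    ∃ e : X → unitInterval, Measurable e ∧ Function.Injective e ∧ ∀ x, (e x : ℝ) ∈ cantorSet := by
  obtain ⟨b, hb, hbi⟩ := MeasurableSpace.measurable_injection_nat_bool_of_countablySeparated X
  refine ⟨fun x => Set.inclusion cantorSet_subset_unitInterval
    (cantorSetHomeomorphNatToBool.symm (b x)), ?_, ?_,
      fun x => (cantorSetHomeomorphNatToBool.symm (b x)).property⟩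
  · exact (continuous_inclusion cantorSet_subset_unitInterval).measurable.comp
      (cantorSetHomeomorphNatToBool.symm.continuous.measurable.comp hb)
  · exact (Set.inclusion_injective cantorSet_subset_unitInterval).comp
      (cantorSetHomeomorphNatToBool.symm.injective.comp hbi)

theorem exists_measurable_injective_ae_eq {X Y : Type*} [MeasurableSpace X] [MeasurableSpace Y]
    {m : Measure X} {f e : X → Y} {N : Set Y} (hf : Measurable f) (hN : MeasurableSet N)
    (hmN : m (f ⁻¹' N) = 0) (hfN : Set.InjOn f (f ⁻¹' N)ᶜ) (he : Measurable e)
    (hei : Function.Injective e) (heN : ∀ x, e x ∈ N) :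
    ∃ T : X → Y, Measurable T ∧ Function.Injective T ∧ T =ᵐ[m] f := by
  classical
  refine ⟨(f ⁻¹' N).piecewise e f, he.piecewise (hf hN) hf,
    (Set.injective_piecewise_iff _).2 ⟨hei.injOn, hfN, fun x _ y hy hxy => hy (hxy ▸ heN x :)⟩, ?_⟩
  filter_upwards [measure_eq_zero_iff_ae_notMem.1 hmN] with x hx
  exact Set.piecewise_eq_of_notMem _ _ _ hx

theorem injOn_compl_preimage_range_rat {β : Type*} [PartialOrder β] {f : ℝ → β}
    (hf : Monotone f) : Set.InjOn f (f ⁻¹' Set.range fun q : ℚ => f q)ᶜ := by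
  intro x hx y hy hxy
  by_contra hne
  wlog hlt : x < y generalizing x y
  · exact this hy hx hxy.symm (Ne.symm hne) (lt_of_le_of_ne (not_lt.1 hlt) (Ne.symm hne))
  obtain ⟨q, hxq, hqy⟩ := exists_rat_btwn hlt
  exact hx ⟨q, le_antisymm ((hf hqy.le).trans_eq hxy.symm) (hf hxq.le)⟩

variable (m : Measure ℝ)

/-- The cumulative distribution function of `m`, as a map into the unit interval. -/
def unitCdf (x : ℝ) : unitInterval :=
  ⟨ProbabilityTheory.cdf m x, ProbabilityTheory.cdf_nonneg m x, ProbabilityTheory.cdf_le_one m x⟩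

theorem monotone_unitCdf : Monotone (unitCdf m) := fun _ _ h => ProbabilityTheory.monotone_cdf m h

variable [IsProbabilityMeasure m] [NullSingletonClass m]

theorem continuous_cdf : Continuous (ProbabilityTheory.cdf m) := by
  have mono := ProbabilityTheory.monotone_cdf m
  refine continuous_iff_continuousAt.2 fun x => continuousAt_iff_continuous_left'_right'.2
    ⟨mono.continuousWithinAt_Iio_iff_leftLim_eq.2 (le_antisymm (mono.leftLim_le le_rfl) ?_),
      ((ProbabilityTheory.cdf m).right_continuous x).mono Set.Ioi_subset_Ici_self⟩
  have jump := (ProbabilityTheory.cdf m).measure_singleton x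
  rw [ProbabilityTheory.measure_cdf, measure_singleton] at jump
  exact sub_nonpos.1 (ENNReal.ofReal_eq_zero.1 jump.symm)

theorem continuous_unitCdf : Continuous (unitCdf m) := (continuous_cdf m).subtype_mk _

theorem exists_unitCdf_eq {a : unitInterval} (h0 : 0 < a) (h1 : a < 1) :
    ∃ s, unitCdf m s = a := by
  obtain ⟨s, hs⟩ := mem_range_of_exists_le_of_exists_ge (continuous_cdf m)
    ((ProbabilityTheory.tendsto_cdf_atBot m).eventually_le_const (u := (a : ℝ)) h0).exists
    ((ProbabilityTheory.tendsto_cdf_atTop m).eventually_const_le (u := (a : ℝ)) h1).exists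
  exact ⟨s, Subtype.ext hs⟩

theorem exists_preimage_unitCdf_eq_Iic {a : unitInterval}
    (hne : (unitCdf m ⁻¹' Set.Iic a).Nonempty) (h1 : a < 1) :
    ∃ s, unitCdf m ⁻¹' Set.Iic a = Set.Iic s ∧ unitCdf m s = a := by
  have bdd : BddAbove (unitCdf m ⁻¹' Set.Iic a) := by
    obtain ⟨b, hb⟩ := ((ProbabilityTheory.tendsto_cdf_atTop m).eventually_const_lt
      (u := (a : ℝ)) h1).exists
    exact ⟨b, fun x hx => le_of_not_gt fun hbx =>
      (hb.trans_le (ProbabilityTheory.monotone_cdf m hbx.le)).not_ge hx⟩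
  have sSup_mem := (isClosed_Iic.preimage (continuous_unitCdf m)).csSup_mem hne bdd
  refine ⟨_, Set.Subset.antisymm (fun x hx => le_csSup bdd hx)
    fun x hx => (monotone_unitCdf m hx).trans sSup_mem, le_antisymm sSup_mem ?_⟩
  rcases eq_or_ne a 0 with rfl | ha0
  · exact unitInterval.nonneg'
  · obtain ⟨t, ht⟩ := exists_unitCdf_eq m (unitInterval.pos_iff_ne_zero.2 ha0) h1
    exact ht.ge.trans (monotone_unitCdf m (le_csSup bdd ht.le))

theorem map_unitCdf : m.map (unitCdf m) = volume := by
  have hmeas := (continuous_unitCdf m).measurable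
  have := Measure.isProbabilityMeasure_map (μ := m) hmeas.aemeasurable
  refine Measure.ext_of_Iic _ _ fun a => ?_
  rw [unitInterval.volume_Iic, Measure.map_apply hmeas measurableSet_Iic]
  rcases eq_or_ne a 1 with rfl | ha1
  · have preimage_univ : unitCdf m ⁻¹' Set.Iic 1 = Set.univ :=
      Set.eq_univ_of_forall fun _ => unitInterval.le_one'
    simp [preimage_univ]
  rcases (unitCdf m ⁻¹' Set.Iic a).eq_empty_or_nonempty with hempty | hne
  · have : a = 0 := by
      by_contra ha0
      obtain ⟨s, hs⟩ := exists_unitCdf_eq m (unitInterval.pos_iff_ne_zero.2 ha0)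
        (unitInterval.lt_one_iff_ne_one.2 ha1)
      exact (hempty ▸ hs.le : s ∈ (∅ : Set ℝ))
    rw [hempty, this]
    simp
  · obtain ⟨s, preimage_eq, hs⟩ :=
      exists_preimage_unitCdf_eq_Iic m hne (unitInterval.lt_one_iff_ne_one.2 ha1)
    rw [preimage_eq, ← ProbabilityTheory.ofReal_cdf, ← hs]
    rfl

theorem exists_measurableEmbedding_map_eq_volume_real :
    ∃ T : ℝ → unitInterval, MeasurableEmbedding T ∧ m.map T = volume := by
  -- the cdf is injective off the preimage of the null set `N`; on that preimage, replace it by an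
  -- injection into the Cantor set, a subset of `N`
  set D := Set.range fun q : ℚ => unitCdf m q
  have countable_D : D.Countable := Set.countable_range _
  set N := D ∪ Subtype.val ⁻¹' cantorSet
  have measurable_N : MeasurableSet N :=
    countable_D.measurableSet.union (measurable_subtype_coe isClosed_cantorSet.measurableSet)
  have volume_N : volume N = 0 := measure_union_null (countable_D.measure_zero _)
    (unitInterval.measurePreserving_coe.quasiMeasurePreserving.preimage_null
      (Measure.restrict_le_self.absolutelyContinuous volume_cantorSet))
  have hmeas := (continuous_unitCdf m).measurable
  have null_preimage : m (unitCdf m ⁻¹' N) = 0 := by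
    rw [← Measure.map_apply hmeas measurable_N, map_unitCdf, volume_N]
  have injOn : Set.InjOn (unitCdf m) (unitCdf m ⁻¹' N)ᶜ :=
    (injOn_compl_preimage_range_rat (monotone_unitCdf m)).mono
      (Set.compl_subset_compl.2 (Set.preimage_mono Set.subset_union_left))
  obtain ⟨e, he, hei, heC⟩ := exists_measurable_injective_mem_cantorSet ℝ
  obtain ⟨T, hT, hTi, hTF⟩ := exists_measurable_injective_ae_eq hmeas measurable_N null_preimage
    injOn he hei fun x => Or.inr (heC x)
  exact ⟨T, hT.measurableEmbedding hTi, (Measure.map_congr hTF).trans (map_unitCdf m)⟩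

theorem exists_measurableEmbedding_map_eq_volume {X : Type*} [MeasurableSpace X]
    [StandardBorelSpace X] (m : Measure X) [IsProbabilityMeasure m] [NullSingletonClass m] :
    ∃ T : X → unitInterval, MeasurableEmbedding T ∧ m.map T = volume := by
  have hι := measurableEmbedding_embeddingReal X
  have := Measure.isProbabilityMeasure_map (μ := m) hι.measurable.aemeasurable
  have : NullSingletonClass (m.map (embeddingReal X)) := ⟨fun x => by
    rw [hι.map_apply]
    exact (Set.subsingleton_singleton.preimage hι.injective).measure_zero m⟩
  obtain ⟨T, hT, hTm⟩ := exists_measurableEmbedding_map_eq_volume_real (m.map (embeddingReal X))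
  exact ⟨_, hT.comp hι, by rw [← hTm, Measure.map_map hT.measurable hι.measurable]⟩

end Embedding

section Coordinates

variable {X ι : Type*} [Fintype ι]

@[fun_prop]
theorem measurable_stdSimplex_coe_apply [MeasurableSpace X] {f : X → stdSimplex ℝ ι}
    (hf : Measurable f) (i : ι) : Measurable fun x => f x i :=
  (measurable_pi_apply i).comp (measurable_subtype_coe.comp hf)

@[fun_prop]
theorem continuous_stdSimplex_coe_apply [TopologicalSpace X] {f : X → stdSimplex ℝ ι}
    (hf : Continuous f) (i : ι) : Continuous fun x => f x i :=
  (continuous_apply i).comp (continuous_subtype_val.comp hf)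

theorem norm_stdSimplex_coe_apply_le_one (p : stdSimplex ℝ ι) (i : ι) : ‖p i‖ ≤ 1 := by
  rw [Real.norm_of_nonneg (stdSimplex.zero_le p i)]
  exact stdSimplex.le_one p i

variable [MeasurableSpace X]

theorem integrable_stdSimplex_coe_apply {f : X → stdSimplex ℝ ι} (hf : Measurable f)
    (m : Measure X) [IsFiniteMeasure m] (i : ι) : Integrable (fun x => f x i) m :=
  Integrable.of_bound (by fun_prop) 1 (ae_of_all _ fun _ => norm_stdSimplex_coe_apply_le_one _ i)

theorem sum_integral_stdSimplex_coe_apply {f : X → stdSimplex ℝ ι} (hf : Measurable f)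
    (m : Measure X) [IsProbabilityMeasure m] : ∑ i, ∫ x, f x i ∂m = 1 := by
  rw [← integral_finsetSum _ fun i _ => integrable_stdSimplex_coe_apply hf m i]
  simp only [stdSimplex.sum_eq_one, integral_const, probReal_univ, smul_eq_mul, mul_one]

theorem norm_stdSimplex_mul_le_one (p q : stdSimplex ℝ ι) (i j : ι) : ‖p i * q j‖ ≤ 1 := by
  rw [norm_mul]
  exact mul_le_one₀ (norm_stdSimplex_coe_apply_le_one p i) (norm_nonneg _)
    (norm_stdSimplex_coe_apply_le_one q j)

theorem integrable_stdSimplex_mul {f : X → stdSimplex ℝ ι} (hf : Measurable f)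
    (μ : Measure (X × X)) [IsFiniteMeasure μ] (i j : ι) :
    Integrable (fun p => f p.1 i * f p.2 j) μ :=
  Integrable.of_bound (by fun_prop) 1 (ae_of_all _ fun _ => norm_stdSimplex_mul_le_one _ _ i j)

end Coordinates

section CouplingShape

variable {X Y ι : Type*} [MeasurableSpace X] [MeasurableSpace Y] [Fintype ι]

/-- The density matrix of the fractional partition `f`, encoded as a map into the simplex, with
respect to the measure `μ` on the square. -/
def densityMatrix (μ : Measure (X × X)) (f : X → stdSimplex ℝ ι) : Matrix ι ι ℝ :=
  Matrix.of fun i j => ∫ p, f p.1 i * f p.2 j ∂μ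

/-- A fractional partition, encoded as a map into the simplex, all of whose parts have the same
`m`-mass. -/
structure IsFairPartition (m : Measure X) (f : X → stdSimplex ℝ ι) : Prop where
  measurable : Measurable f
  integral_eq : ∀ i, ∫ x, f x i ∂m = 1 / Fintype.card ι

/-- The analogue of the `k`-shape for a measure `μ` on the square of an arbitrary measure space
`(X, m)`, with an arbitrary finite type `ι` indexing the parts. Nothing relates `μ` to `m`. -/
def couplingShape (m : Measure X) (μ : Measure (X × X)) (ι : Type*) [Fintype ι] :
    Set (Matrix ι ι ℝ) :=
  closure (densityMatrix μ '' {f | IsFairPartition m f})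

theorem densityMatrix_mem_couplingShape {m : Measure X} (μ : Measure (X × X))
    {f : X → stdSimplex ℝ ι} (hf : IsFairPartition m f) :
    densityMatrix μ f ∈ couplingShape m μ ι :=
  subset_closure ⟨f, hf, rfl⟩

theorem exists_isFairPartition_densityMatrix_mem {m : Measure X} {μ : Measure (X × X)}
    {V : Set (Matrix ι ι ℝ)} (hV : IsOpen V) (h : (couplingShape m μ ι ∩ V).Nonempty) :
    ∃ f : X → stdSimplex ℝ ι, IsFairPartition m f ∧ densityMatrix μ f ∈ V := by
  obtain ⟨_, hfV, f, hf, rfl⟩ := (closure_inter_open_nonempty_iff hV).1 h |>.imp fun _ => And.symm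
  exact ⟨f, hf, hfV⟩

theorem kShape_eq_couplingShape (μ : Measure Sq) (k : ℕ) :
    kShape μ k = couplingShape volume μ (Fin k) := by
  refine congrArg closure (Set.ext fun M => ⟨?_, ?_⟩)
  · rintro ⟨f, ⟨hmeas, hnonneg, hsum, hint⟩, hM⟩
    exact ⟨fun x => ⟨fun i => f i x, fun i => hnonneg i x, hsum x⟩,
      ⟨(measurable_pi_lambda _ hmeas).subtype_mk,
        fun i => (hint i).trans (by rw [Fintype.card_fin])⟩,
      Matrix.ext fun i j => (hM i j).symm⟩
  · rintro ⟨f, hf, rfl⟩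
    exact ⟨fun i x => f x i, ⟨measurable_stdSimplex_coe_apply hf.measurable,
      fun i x => stdSimplex.zero_le (f x) i, fun x => stdSimplex.sum_eq_one (f x),
      fun i => by simpa using hf.integral_eq i⟩, fun _ _ => rfl⟩

theorem isFairPartition_map_iff {m : Measure X} {F : X → Y} (hF : Measurable F)
    {f : Y → stdSimplex ℝ ι} (hf : Measurable f) :
    IsFairPartition (m.map F) f ↔ IsFairPartition m (f ∘ F) := by
  have integral_map_coe (i : ι) : ∫ y, f y i ∂m.map F = ∫ x, (f ∘ F) x i ∂m :=
    integral_map hF.aemeasurable (by fun_prop)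
  exact ⟨fun h => ⟨hf.comp hF, fun i => integral_map_coe i ▸ h.integral_eq i⟩,
    fun h => ⟨hf, fun i => (integral_map_coe i).trans (h.integral_eq i)⟩⟩

theorem densityMatrix_map {F : X → Y} (hF : Measurable F) (μ : Measure (X × X))
    {f : Y → stdSimplex ℝ ι} (hf : Measurable f) :
    densityMatrix (μ.map (Prod.map F F)) f = densityMatrix μ (f ∘ F) :=
  Matrix.ext fun _ _ => integral_map (hF.prodMap hF).aemeasurable (by fun_prop)

theorem couplingShape_map [Nonempty ι] {F : X → Y} (hF : MeasurableEmbedding F) (m : Measure X)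
    (μ : Measure (X × X)) :
    couplingShape (m.map F) (μ.map (Prod.map F F)) ι = couplingShape m μ ι := by
  refine congrArg closure (Set.Subset.antisymm ?_ ?_)
  · rintro _ ⟨f, hf, rfl⟩
    exact ⟨f ∘ F, (isFairPartition_map_iff hF.measurable hf.measurable).1 hf,
      (densityMatrix_map hF.measurable μ hf.measurable).symm⟩
  · rintro _ ⟨f, hf, rfl⟩
    obtain ⟨g, hg, rfl⟩ := hF.exists_measurable_extend hf.measurable
      fun _ => ⟨stdSimplex.barycenter⟩
    exact ⟨g, (isFairPartition_map_iff hF.measurable hg).2 hf,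
      densityMatrix_map hF.measurable μ hg⟩

theorem couplingShape_subset_matrix_Icc (m : Measure X) (μ : Measure (X × X))
    [IsProbabilityMeasure μ] : couplingShape m μ ι ⊆ (Set.Icc (-1 : ℝ) 1).matrix := by
  refine closure_minimal ?_ isCompact_Icc.matrix.isClosed
  rintro _ ⟨f, -, rfl⟩ i j
  have bound := norm_integral_le_of_norm_le_const (μ := μ)
    (ae_of_all _ fun p => norm_stdSimplex_mul_le_one (f p.1) (f p.2) i j)
  rw [probReal_univ, mul_one] at bound
  exact abs_le.1 bound

end CouplingShape

section LowerHemicontinuity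

variable {X ι : Type*} [MeasurableSpace X] [Fintype ι]

/-- The masses of the parts of a fractional partition together with its density matrix. -/
def partitionData (m : Measure X) (μ : Measure (X × X)) (f : X → stdSimplex ℝ ι) :
    (ι → ℝ) × Matrix ι ι ℝ :=
  ((fun i => ∫ x, f x i ∂m), densityMatrix μ f)

theorem partitionData_of_isFairPartition {m : Measure X} (μ : Measure (X × X))
    {f : X → stdSimplex ℝ ι} (hf : IsFairPartition m f) :
    partitionData m μ f = ((fun _ => 1 / (Fintype.card ι : ℝ)), densityMatrix μ f) :=
  Prod.ext (funext hf.integral_eq) rfl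

theorem exists_isFairPartition_abs_sub_le [Nonempty ι] {m : Measure X} [IsProbabilityMeasure m]
    {p : X → stdSimplex ℝ ι} (hp : Measurable p) {t : ℝ} (ht0 : 0 < t) (ht1 : t ≤ 1)
    (hpt : ∀ i, (1 - t) * ∫ x, p x i ∂m ≤ 1 / Fintype.card ι) :
    ∃ f : X → stdSimplex ℝ ι, IsFairPartition m f ∧ ∀ x i, |f x i - p x i| ≤ t := by
  -- mixing `p` with weight `t` of the constant partition `c` makes it fair
  let c : stdSimplex ℝ ι := ⟨fun i => (1 / Fintype.card ι - (1 - t) * ∫ x, p x i ∂m) / t,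
    fun i => div_nonneg (sub_nonneg.2 (hpt i)) ht0.le, by
      rw [← Finset.sum_div, Finset.sum_sub_distrib, ← Finset.mul_sum,
        sum_integral_stdSimplex_coe_apply hp]
      simp [ht0.ne']⟩
  let f (x : X) : stdSimplex ℝ ι := ⟨(1 - t) • (p x : ι → ℝ) + t • (c : ι → ℝ),
    convex_stdSimplex ℝ ι (p x).2 c.2 (sub_nonneg.2 ht1) ht0.le (sub_add_cancel 1 t)⟩
  have f_apply (x : X) (i : ι) : f x i = (1 - t) * p x i + t * c i := rfl
  have c_apply (i : ι) : t * c i = 1 / Fintype.card ι - (1 - t) * ∫ x, p x i ∂m :=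
    mul_div_cancel₀ _ ht0.ne'
  have measurable_f : Measurable f :=
    (((measurable_subtype_coe.comp hp).const_smul (1 - t)).add_const _).subtype_mk
  refine ⟨f, ⟨measurable_f, fun i => ?_⟩, fun x i => ?_⟩
  · simp only [f_apply, c_apply]
    rw [integral_add ((integrable_stdSimplex_coe_apply hp m i).const_mul _)
      (integrable_const _), integral_const_mul]
    simp
  · rw [f_apply, show (1 - t) * p x i + t * c i - p x i = t * (c i - p x i) by ring, abs_mul,
      abs_of_pos ht0]
    refine mul_le_of_le_one_right ht0.le (abs_sub_le_iff.2 ⟨?_, ?_⟩)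
    · linarith [stdSimplex.le_one c i, stdSimplex.zero_le (p x) i]
    · linarith [stdSimplex.le_one (p x) i, stdSimplex.zero_le c i]

theorem abs_densityMatrix_sub_le {μ : Measure (X × X)} [IsProbabilityMeasure μ]
    {f g : X → stdSimplex ℝ ι} (hf : Measurable f) (hg : Measurable g) {t : ℝ}
    (hfg : ∀ x i, |f x i - g x i| ≤ t) (i j : ι) :
    |densityMatrix μ f i j - densityMatrix μ g i j| ≤ 2 * t := by
  have pointwise (p : X × X) : ‖f p.1 i * f p.2 j - g p.1 i * g p.2 j‖ ≤ 2 * t :=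
    calc ‖f p.1 i * f p.2 j - g p.1 i * g p.2 j‖
      _ = ‖(f p.1 i - g p.1 i) * f p.2 j + g p.1 i * (f p.2 j - g p.2 j)‖ := by ring_nf
      _ ≤ ‖f p.1 i - g p.1 i‖ * ‖f p.2 j‖ + ‖g p.1 i‖ * ‖f p.2 j - g p.2 j‖ :=
        norm_add_le_of_le (norm_mul_le _ _) (norm_mul_le _ _)
      _ ≤ ‖f p.1 i - g p.1 i‖ + ‖f p.2 j - g p.2 j‖ :=
        add_le_add
          (mul_le_of_le_one_right (norm_nonneg _) (norm_stdSimplex_coe_apply_le_one _ _))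
          (mul_le_of_le_one_left (norm_nonneg _) (norm_stdSimplex_coe_apply_le_one _ _))
      _ ≤ 2 * t := (add_le_add (hfg _ _) (hfg _ _)).trans_eq (two_mul t).symm
  have bound := norm_integral_le_of_norm_le_const (μ := μ) (ae_of_all _ pointwise)
  rw [integral_sub (integrable_stdSimplex_mul hf μ i j) (integrable_stdSimplex_mul hg μ i j),
    probReal_univ, mul_one] at bound
  exact bound

open scoped Matrix.Norms.Elementwise in
theorem eventually_nhds_couplingShape_inter_nonempty [Nonempty ι] {U : Set (Matrix ι ι ℝ)}
    (hU : IsOpen U) {M : Matrix ι ι ℝ} (hM : M ∈ U) :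
    ∀ᶠ w in 𝓝 ((fun _ : ι => 1 / (Fintype.card ι : ℝ)), M),
      ∀ (m : Measure X) (μ : Measure (X × X)) [IsProbabilityMeasure m] [IsProbabilityMeasure μ]
        (p : X → stdSimplex ℝ ι), Measurable p → partitionData m μ p = w →
        (couplingShape m μ ι ∩ U).Nonempty := by
  obtain ⟨ε, hε, ball_subset⟩ := Metric.isOpen_iff.1 hU M hM
  obtain ⟨t, ht0, ht⟩ : ∃ t : ℝ, 0 < t ∧ t < min 1 (ε / 4) := exists_between (by positivity)
  have ht1 : t < 1 := ht.trans_le (min_le_left _ _)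
  have card_pos : (0 : ℝ) < 1 / Fintype.card ι := by positivity
  have masses_le : ∀ᶠ w : (ι → ℝ) × Matrix ι ι ℝ in 𝓝 ((fun _ => 1 / (Fintype.card ι : ℝ)), M),
      ∀ i, (1 - t) * w.1 i ≤ 1 / Fintype.card ι :=
    eventually_all.2 fun i => (Continuous.tendsto (by fun_prop) _).eventually_le_const
      (mul_lt_of_lt_one_left card_pos (by linarith))
  have matrix_mem : ∀ᶠ w in 𝓝 ((fun _ : ι => 1 / (Fintype.card ι : ℝ)), M),
      w.2 ∈ Metric.ball M (ε / 2) :=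
    continuous_snd.tendsto _ (Metric.ball_mem_nhds M (half_pos hε))
  filter_upwards [masses_le, matrix_mem] with w hw hwM m μ _ _ p hp hpw
  subst hpw
  obtain ⟨f, hf, hfp⟩ := exists_isFairPartition_abs_sub_le hp ht0 ht1.le hw
  refine ⟨_, densityMatrix_mem_couplingShape μ hf, ball_subset ?_⟩
  have dist_le : dist (densityMatrix μ f) (densityMatrix μ p) ≤ 2 * t := by
    rw [dist_eq_norm, Matrix.norm_le_iff (by positivity)]
    exact abs_densityMatrix_sub_le hf.measurable hp hfp
  rw [Metric.mem_ball] at hwM ⊢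
  linarith [dist_triangle (densityMatrix μ f) (densityMatrix μ p) M, ht.trans_le (min_le_right _ _),
    show dist (densityMatrix μ p) M < ε / 2 from hwM]

theorem tendsto_partitionData {m : Measure X} [IsFiniteMeasure m] {μ : Measure (X × X)}
    [IsFiniteMeasure μ] {h : ℕ → X → stdSimplex ℝ ι} {g : X → stdSimplex ℝ ι}
    (hh : ∀ n, Measurable (h n))
    (hg : ∀ᵐ x ∂(m + μ.map Prod.fst + μ.map Prod.snd), Tendsto (h · x) atTop (𝓝 (g x))) :
    Tendsto (fun n => partitionData m μ (h n)) atTop (𝓝 (partitionData m μ g)) := by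
  have coord (x : X) (hx : Tendsto (h · x) atTop (𝓝 (g x))) (i : ι) :
      Tendsto (fun n => h n x i) atTop (𝓝 (g x i)) :=
    ((continuous_stdSimplex_coe_apply continuous_id i).tendsto _).comp hx
  obtain ⟨h₁, ae_snd⟩ := ae_add_measure_iff.1 hg
  obtain ⟨ae_m, ae_fst⟩ := ae_add_measure_iff.1 h₁
  refine Tendsto.prodMk_nhds (tendsto_pi_nhds.2 fun i => ?_)
    (tendsto_pi_nhds.2 fun i => tendsto_pi_nhds.2 fun j => ?_)
  · refine tendsto_integral_of_dominated_convergence (fun _ => 1) (fun n => ?_)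
      (integrable_const _) (fun n => ae_of_all _ fun x => norm_stdSimplex_coe_apply_le_one _ i) ?_
    · exact (measurable_stdSimplex_coe_apply (hh n) i).aestronglyMeasurable
    · filter_upwards [ae_m] with x hx using coord x hx i
  · refine tendsto_integral_of_dominated_convergence (fun _ => 1) (fun n => ?_)
      (integrable_const _) (fun n => ae_of_all _ fun p => norm_stdSimplex_mul_le_one _ _ i j) ?_
    · exact (integrable_stdSimplex_mul (hh n) μ i j).aestronglyMeasurable
    · filter_upwards [ae_of_ae_map measurable_fst.aemeasurable ae_fst,
        ae_of_ae_map measurable_snd.aemeasurable ae_snd] with p hp₁ hp₂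
      exact (coord _ hp₁ i).mul (coord _ hp₂ j)

theorem exists_seq_continuous_tendsto_ae {X E : Type*} [TopologicalSpace X] [NormalSpace X]
    [MeasurableSpace X] [BorelSpace X] [NormedAddCommGroup E] [NormedSpace ℝ E] {M : Measure X}
    [M.WeaklyRegular] {g : X → E} (hg : Integrable g M) :
    ∃ h : ℕ → X → E, (∀ n, Continuous (h n)) ∧
      ∀ᵐ x ∂M, Tendsto (h · x) atTop (𝓝 (g x)) := by
  have approx (n : ℕ) := (memLp_one_iff_integrable.2 hg).exists_boundedContinuous_eLpNorm_sub_le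
    ENNReal.one_ne_top (ENNReal.inv_ne_zero.2 (ENNReal.natCast_ne_top n))
  choose c hc hcM using approx
  have tendsto_eLpNorm : Tendsto (fun n => eLpNorm (⇑(c n) - g) 1 M) atTop (𝓝 0) :=
    tendsto_of_tendsto_of_tendsto_of_le_of_le tendsto_const_nhds ENNReal.tendsto_inv_nat_nhds_zero
      (fun _ => zero_le) fun n => (eLpNorm_sub_comm _ _ _ _).trans_le (hc n)
  obtain ⟨φ, -, hφ⟩ := (tendstoInMeasure_of_tendsto_eLpNorm one_ne_zero
    (fun n => (hcM n).aestronglyMeasurable) hg.aestronglyMeasurable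
    tendsto_eLpNorm).exists_seq_tendsto_ae
  exact ⟨fun n => c (φ n), fun n => (c (φ n)).continuous, hφ⟩

theorem exists_continuous_retraction_stdSimplex (ι : Type*) [Fintype ι] [Nonempty ι] :
    ∃ r : (ι → ℝ) → stdSimplex ℝ ι, Continuous r ∧ ∀ p : stdSimplex ℝ ι, r p = p := by
  let s (v : ι → ℝ) : ℝ := ∑ i, max (v i) 0
  have one_le (v) : 1 ≤ max (s v) 1 := le_max_right _ _
  -- the positive part of `v`, scaled down if its sum exceeds `1` and topped up uniformly otherwise
  let r (v : ι → ℝ) (i : ι) : ℝ :=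
    max (v i) 0 / max (s v) 1 + (1 - s v / max (s v) 1) / Fintype.card ι
  have continuous_r : Continuous r := by
    have (v : ι → ℝ) : max (s v) 1 ≠ 0 := (zero_lt_one.trans_le (one_le v)).ne'
    fun_prop (disch := exact this)
  have nonneg (v i) : 0 ≤ r v i := by
    have : s v / max (s v) 1 ≤ 1 := div_le_one_of_le₀ (le_max_left _ _) (by positivity)
    have := sub_nonneg.2 this
    positivity
  have sum_eq_one (v) : ∑ i, r v i = 1 := by
    simp only [r, Finset.sum_add_distrib, ← Finset.sum_div, Finset.sum_const, Finset.card_univ,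
      nsmul_eq_mul]
    rw [mul_div_cancel_left₀ _ (by simp)]
    exact add_sub_cancel _ _
  refine ⟨fun v => ⟨r v, nonneg v, sum_eq_one v⟩, continuous_r.subtype_mk _, fun p => ?_⟩
  ext i
  have s_eq : s p = 1 := by simp [s]
  change r p i = p i
  simp [r, s_eq]

variable [TopologicalSpace X] [BorelSpace X]

theorem exists_seq_continuous_stdSimplex_tendsto_ae [Nonempty ι] [NormalSpace X] (M : Measure X)
    [IsFiniteMeasure M] [M.WeaklyRegular] {g : X → stdSimplex ℝ ι} (hg : Measurable g) :
    ∃ h : ℕ → X → stdSimplex ℝ ι, (∀ n, Continuous (h n)) ∧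
      ∀ᵐ x ∂M, Tendsto (h · x) atTop (𝓝 (g x)) := by
  obtain ⟨r, hr, r_coe⟩ := exists_continuous_retraction_stdSimplex ι
  have integrable_g : Integrable (fun x => (g x : ι → ℝ)) M :=
    Integrable.of_eval fun i => integrable_stdSimplex_coe_apply hg M i
  obtain ⟨h, hh, hlim⟩ := exists_seq_continuous_tendsto_ae integrable_g
  refine ⟨fun n => r ∘ h n, fun n => hr.comp (hh n), ?_⟩
  filter_upwards [hlim] with x hx
  have := (hr.tendsto _).comp hx
  rwa [r_coe] at this

theorem continuous_partitionData [CompactSpace X] [SecondCountableTopology X]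
    {h : X → stdSimplex ℝ ι} (hh : Continuous h) :
    Continuous fun q : ProbabilityMeasure X × ProbabilityMeasure (X × X) =>
      partitionData (q.1 : Measure X) (q.2 : Measure (X × X)) h := by
  refine Continuous.prodMk (continuous_pi fun i => ?_)
    (continuous_pi fun i => continuous_pi fun j => ?_)
  · exact (ProbabilityMeasure.continuous_integral_continuousMap
      (⟨fun x => h x i, by fun_prop⟩ : C(X, ℝ))).comp continuous_fst
  · exact (ProbabilityMeasure.continuous_integral_continuousMap
      (⟨fun p => h p.1 i * h p.2 j, by fun_prop⟩ : C(X × X, ℝ))).comp continuous_snd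

theorem lowerHemicontinuous_couplingShape [CompactSpace X] [TopologicalSpace.MetrizableSpace X]
    [Nonempty ι] :
    LowerHemicontinuous fun q : ProbabilityMeasure X × ProbabilityMeasure (X × X) =>
      couplingShape (q.1 : Measure X) (q.2 : Measure (X × X)) ι := by
  rintro q U ⟨hU, hne⟩
  obtain ⟨g, hg, hgU⟩ := exists_isFairPartition_densityMatrix_mem hU hne
  obtain ⟨h, hh, hlim⟩ := exists_seq_continuous_stdSimplex_tendsto_ae
    ((q.1 : Measure X) + (q.2 : Measure (X × X)).map Prod.fst +
      (q.2 : Measure (X × X)).map Prod.snd) hg.measurable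
  have data_tendsto := tendsto_partitionData (fun n => (hh n).measurable) hlim
  rw [partitionData_of_isFairPartition _ hg] at data_tendsto
  obtain ⟨n, hn⟩ := (data_tendsto.eventually
    (eventually_nhds_couplingShape_inter_nonempty (X := X) hU hgU).eventually_nhds).exists
  filter_upwards [((continuous_partitionData (hh n)).tendsto q).eventually hn] with q' hq'
  exact ⟨hU, hq' _ _ _ (hh n).measurable rfl⟩

end LowerHemicontinuity

section Vietoris

theorem eventually_subset_of_isTopologicalBasis {Y α : Type*} [TopologicalSpace Y]
    [RegularSpace Y] {l : Filter α} {C : α → Set Y} {A K U : Set Y} (hA : IsClosed A)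
    (hK : IsCompact K) (hCK : ∀ n, C n ⊆ K) {B : Set (Set Y)}
    (hB : TopologicalSpace.IsTopologicalBasis B)
    (h : ∀ V ∈ B, ∃ M : α → Y, (∀ n, (C n ∩ V).Nonempty → M n ∈ V) ∧
      ∃ L ∈ A, Tendsto M l (𝓝 L))
    (hU : IsOpen U) (hAU : A ⊆ U) : ∀ᶠ n in l, C n ⊆ U := by
  have disjoint_compl : ∀ᶠ n in l, Disjoint (C n) (K \ U) := by
    refine (hK.diff hU).induction_on (p := fun S => ∀ᶠ n in l, Disjoint (C n) S) (by simp)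
      (fun _ _ hst ht => ht.mono fun _ hn => hn.mono_right hst)
      (fun _ _ hs ht => hs.mp (ht.mono fun _ hnt hns => hns.union_right hnt)) fun x hx => ?_
    obtain ⟨W, hxW, hWclosed, hWA⟩ :=
      exists_mem_nhds_isClosed_subset (hA.isOpen_compl.mem_nhds fun hxA => hx.2 (hAU hxA))
    obtain ⟨V, hVB, hxV, hVW⟩ := hB.mem_nhds_iff.1 hxW
    refine ⟨V, mem_nhdsWithin_of_mem_nhds ((hB.isOpen hVB).mem_nhds hxV), ?_⟩
    obtain ⟨M, hMV, L, hLA, hML⟩ := h V hVB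
    by_contra hcon
    have frequently_mem : ∃ᶠ n in l, M n ∈ W := (not_eventually.1 hcon).mono fun n hn =>
      hVW (hMV n (Set.not_disjoint_iff_nonempty_inter.1 hn))
    exact hWA (hWclosed.mem_of_frequently_of_tendsto frequently_mem hML) hLA
  filter_upwards [disjoint_compl] with n hn x hx
  by_contra hxU
  exact Set.disjoint_left.1 hn hx ⟨hCK n hx, hxU⟩

variable {X Y ι : Type*} [MeasurableSpace X] [MeasurableSpace Y] [Fintype ι] [Nonempty ι]

/-- `f` is a fair partition deciding whether the shape of `μ` meets `V`: if it does, then the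
density matrix of `f` lies in `V`. -/
structure IsShapeWitness (m : Measure X) (μ : Measure (X × X)) (V : Set (Matrix ι ι ℝ))
    (f : X → stdSimplex ℝ ι) : Prop where
  isFairPartition : IsFairPartition m f
  densityMatrix_mem : (couplingShape m μ ι ∩ V).Nonempty → densityMatrix μ f ∈ V

theorem exists_isShapeWitness (m : Measure X) [IsProbabilityMeasure m] (μ : Measure (X × X))
    {V : Set (Matrix ι ι ℝ)} (hV : IsOpen V) :
    ∃ f : X → stdSimplex ℝ ι, IsShapeWitness m μ V f := by
  by_cases hne : (couplingShape m μ ι ∩ V).Nonempty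
  · obtain ⟨f, hf, hfV⟩ := exists_isFairPartition_densityMatrix_mem hV hne
    exact ⟨f, hf, fun _ => hfV⟩
  · refine ⟨fun _ => stdSimplex.barycenter, ⟨measurable_const, fun i => ?_⟩, fun h => (hne h).elim⟩
    simp [show stdSimplex.barycenter i = (Fintype.card ι : ℝ)⁻¹ from rfl]

theorem isShapeWitness_map_iff {F : X → Y} (hF : MeasurableEmbedding F) {m : Measure X}
    {μ : Measure (X × X)} {V : Set (Matrix ι ι ℝ)} {f : Y → stdSimplex ℝ ι} (hf : Measurable f) :
    IsShapeWitness (m.map F) (μ.map (Prod.map F F)) V f ↔ IsShapeWitness m μ V (f ∘ F) := by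
  have shape_eq := couplingShape_map (ι := ι) hF m μ
  have matrix_eq := densityMatrix_map hF.measurable μ hf
  have fair_iff := isFairPartition_map_iff (m := m) hF.measurable hf
  exact ⟨fun ⟨h₁, h₂⟩ => ⟨fair_iff.1 h₁, by rwa [shape_eq, matrix_eq] at h₂⟩,
    fun ⟨h₁, h₂⟩ => ⟨fair_iff.2 h₁, by rwa [shape_eq, matrix_eq]⟩⟩

theorem vietorisTendsto_couplingShape [TopologicalSpace X] [BorelSpace X] [CompactSpace X]
    [TopologicalSpace.MetrizableSpace X]
    {q : ℕ → ProbabilityMeasure X × ProbabilityMeasure (X × X)}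
    {q' : ProbabilityMeasure X × ProbabilityMeasure (X × X)} (hq : Tendsto q atTop (𝓝 q'))
    {B : Set (Set (Matrix ι ι ℝ))} (hB : TopologicalSpace.IsTopologicalBasis B)
    (h : ∀ V ∈ B, ∃ f : X → stdSimplex ℝ ι, Continuous f ∧
      ∀ n, IsShapeWitness ((q n).1 : Measure X) ((q n).2 : Measure (X × X)) V f) :
    VietorisTendsto (fun n => couplingShape ((q n).1 : Measure X) ((q n).2 : Measure (X × X)) ι)
      (couplingShape (q'.1 : Measure X) (q'.2 : Measure (X × X)) ι) := by
  refine ⟨fun U hU hsub => ?_, fun U hU hne =>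
    (hq.eventually (lowerHemicontinuous_couplingShape q' U ⟨hU, hne⟩)).mono fun _ => And.right⟩
  refine eventually_subset_of_isTopologicalBasis isClosed_closure isCompact_Icc.matrix
    (fun n => couplingShape_subset_matrix_Icc _ _) hB (fun V hV => ?_) hU hsub
  obtain ⟨f, hf, witness⟩ := h V hV
  have data_tendsto := ((continuous_partitionData hf).tendsto q').comp hq
  have masses_tendsto (i : ι) := (tendsto_pi_nhds.1 data_tendsto.fst_nhds) i
  have fair_limit : IsFairPartition (q'.1 : Measure X) f := ⟨hf.measurable, fun i =>
    tendsto_nhds_unique (masses_tendsto i)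
      (tendsto_const_nhds.congr fun n => ((witness n).isFairPartition.integral_eq i).symm)⟩
  exact ⟨_, fun n => (witness n).densityMatrix_mem, _, densityMatrix_mem_couplingShape _ fair_limit,
    data_tendsto.snd_nhds⟩

end Vietoris

section Encoding

instance {m n R : Type*} [Countable m] [Countable n] [TopologicalSpace R]
    [SecondCountableTopology R] : SecondCountableTopology (Matrix m n R) :=
  inferInstanceAs (SecondCountableTopology (m → n → R))

/-- The pairs `(k, V)` with `V` ranging over a countable basis of the `(k + 1) × (k + 1)`
matrices. -/
abbrev ShapeTest : Type :=
  Σ k : ℕ, TopologicalSpace.countableBasis (Matrix (Fin (k + 1)) (Fin (k + 1)) ℝ)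

/-- A compact space recording a point of `Z` together with the values at that point of one
fractional partition for each `t : ShapeTest`, so that all these partitions become continuous. -/
abbrev CodeSpace (Z : Type*) : Type _ := Z × ((t : ShapeTest) → stdSimplex ℝ (Fin (t.1 + 1)))

variable {Z : Type*} [MeasurableSpace Z]

theorem exists_measurableEmbedding_isShapeWitness [StandardBorelSpace Z] (m : Measure Z)
    [IsProbabilityMeasure m] (μ : Measure (Z × Z)) :
    ∃ F : Z → CodeSpace Z, MeasurableEmbedding F ∧ Prod.fst ∘ F = id ∧
      ∀ t : ShapeTest,
        IsShapeWitness (m.map F) (μ.map (Prod.map F F)) (t.2 : Set _) fun x => x.2 t := by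
  choose f hf using fun t : ShapeTest => exists_isShapeWitness m μ
    (TopologicalSpace.isOpen_of_mem_countableBasis t.2.2)
  have embedding : MeasurableEmbedding fun x : Z => ((x, fun t => f t x) : CodeSpace Z) :=
    (measurable_id.prodMk (measurable_pi_lambda _ fun t =>
      (hf t).isFairPartition.measurable)).measurableEmbedding fun _ _ h => congrArg Prod.fst h
  exact ⟨_, embedding, rfl, fun t => (isShapeWitness_map_iff embedding
    ((measurable_pi_apply t).comp measurable_snd)).2 (hf t)⟩

theorem isClosed_setOf_map_eq {X Y : Type*} [TopologicalSpace X] [MeasurableSpace X]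
    [OpensMeasurableSpace X] [TopologicalSpace Y] [HasOuterApproxClosed Y] [MeasurableSpace Y]
    [BorelSpace Y] {g : X → Y} (hg : Continuous g) :
    IsClosed {q : ProbabilityMeasure X × ProbabilityMeasure Y |
      (q.1 : Measure X).map g = (q.2 : Measure Y)} := by
  have closed := isClosed_eq ((ProbabilityMeasure.continuous_map hg).comp continuous_fst)
    (continuous_snd (X := ProbabilityMeasure X) (Y := ProbabilityMeasure Y))
  exact (congrArg IsClosed (Set.ext fun _ => Subtype.ext_iff)).mp closed

theorem map_swap_map_prodMap {X Y : Type*} [MeasurableSpace X] [MeasurableSpace Y] {F : X → Y}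
    (hF : Measurable F) {μ : Measure (X × X)} (hμ : μ.map Prod.swap = μ) :
    (μ.map (Prod.map F F)).map Prod.swap = μ.map (Prod.map F F) := by
  rw [Measure.map_map measurable_swap (hF.prodMap hF), ← Prod.map_comp_swap,
    ← Measure.map_map (hF.prodMap hF) measurable_swap, hμ]

set_option synthInstance.maxSize 256 in
theorem exists_subseq_vietorisTendsto_codeSpace [TopologicalSpace Z] [BorelSpace Z]
    [CompactSpace Z] [TopologicalSpace.MetrizableSpace Z] (m : ProbabilityMeasure Z)
    (μ : ℕ → ProbabilityMeasure (Z × Z)) :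
    ∃ φ : ℕ → ℕ, StrictMono φ ∧ ∃ (m' : ProbabilityMeasure (CodeSpace Z))
      (μ' : ProbabilityMeasure (CodeSpace Z × CodeSpace Z)),
      (m' : Measure (CodeSpace Z)).map Prod.fst = (m : Measure Z) ∧
      ((∀ n, (μ n : Measure (Z × Z)).map Prod.swap = (μ n : Measure (Z × Z))) →
        (μ' : Measure (CodeSpace Z × CodeSpace Z)).map Prod.swap = (μ' : Measure _)) ∧
      ∀ k : ℕ, VietorisTendsto
        (fun j => couplingShape (m : Measure Z) (μ (φ j) : Measure (Z × Z)) (Fin (k + 1)))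
        (couplingShape (m' : Measure (CodeSpace Z)) (μ' : Measure _) (Fin (k + 1))) := by
  have : PolishSpace Z := by
    let := TopologicalSpace.metrizableSpaceMetric Z
    infer_instance
  choose F hF fst_comp witness using fun n =>
    exists_measurableEmbedding_isShapeWitness (m : Measure Z) (μ n : Measure (Z × Z))
  have hFF (n : ℕ) : Measurable (Prod.map (F n) (F n)) :=
    (hF n).measurable.prodMap (hF n).measurable
  obtain ⟨q', φ, hφ, hlim⟩ := CompactSpace.tendsto_subseq fun n =>
    (m.map (hF n).measurable.aemeasurable, (μ n).map (hFF n).aemeasurable)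
  refine ⟨φ, hφ, q'.1, q'.2, ?_, fun hsymm => ?_, fun k => ?_⟩
  · refine (isClosed_setOf_map_eq continuous_fst).mem_of_tendsto
      (hlim.fst_nhds.prodMk_nhds tendsto_const_nhds) (.of_forall fun n => ?_)
    exact (Measure.map_map measurable_fst (hF _).measurable).trans
      (by rw [fst_comp, Measure.map_id])
  · exact (isClosed_setOf_map_eq continuous_swap).mem_of_tendsto
      (hlim.snd_nhds.prodMk_nhds hlim.snd_nhds)
      (.of_forall fun n => map_swap_map_prodMap (hF _).measurable (hsymm _))
  · have shape_eq (n : ℕ) := couplingShape_map (ι := Fin (k + 1)) (hF n) (m : Measure Z) (μ n)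
    simp only [← shape_eq]
    exact vietorisTendsto_couplingShape hlim (TopologicalSpace.isBasis_countableBasis _)
      fun V hV => ⟨fun x => x.2 ⟨k, V, hV⟩, by fun_prop, fun n => witness (φ n) ⟨k, V, hV⟩⟩

theorem nullSingletonClass_of_map {X Y : Type*} [MeasurableSpace X] [MeasurableSpace Y]
    [MeasurableSingletonClass Y] {m : Measure X} {g : X → Y} (hg : Measurable g)
    [NullSingletonClass (m.map g)] : NullSingletonClass m := by
  refine ⟨fun x => measure_mono_null (Set.singleton_subset_iff.2 (Set.mem_singleton (g x)) :
    {x} ⊆ g ⁻¹' {g x}) ?_⟩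
  rw [← Measure.map_apply hg (measurableSet_singleton _), measure_singleton]

theorem exists_kShape_eq_couplingShape {X : Type*} [MeasurableSpace X] [StandardBorelSpace X]
    (m : Measure X) [IsProbabilityMeasure m] [NullSingletonClass m]
    (μ : ProbabilityMeasure (X × X)) :
    ∃ ν : ProbabilityMeasure Sq,
      ((μ : Measure (X × X)).map Prod.swap = (μ : Measure (X × X)) →
        IsSymmSq (ν : Measure Sq)) ∧
      ∀ k : ℕ, kShape (ν : Measure Sq) (k + 1) =
        couplingShape m (μ : Measure (X × X)) (Fin (k + 1)) := by
  obtain ⟨T, hT, hTm⟩ := exists_measurableEmbedding_map_eq_volume m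
  refine ⟨μ.map (hT.measurable.prodMap hT.measurable).aemeasurable,
    map_swap_map_prodMap hT.measurable, fun k => ?_⟩
  rw [kShape_eq_couplingShape, ← hTm]
  exact couplingShape_map hT m μ

end Encoding

theorem stmt15_general (ν : ℕ → ProbabilityMeasure Sq) :
    ∃ φ : ℕ → ℕ, StrictMono φ ∧ ∃ νlim : ProbabilityMeasure Sq,
      ((∀ n, IsSymmSq (ν n : Measure Sq)) → IsSymmSq (νlim : Measure Sq)) ∧
      ∀ k : ℕ, 0 < k →
        VietorisTendsto (fun j => kShape (ν (φ j) : Measure Sq) k)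
          (kShape (νlim : Measure Sq) k) := by
  obtain ⟨φ, hφ, m', μ', hm', swap_μ', tendsto_shape⟩ :=
    exists_subseq_vietorisTendsto_codeSpace (⟨volume, inferInstance⟩ : ProbabilityMeasure _) ν
  have : NullSingletonClass ((m' : Measure (CodeSpace unitInterval)).map Prod.fst) :=
    hm' ▸ inferInstanceAs (NullSingletonClass (volume : Measure unitInterval))
  have := nullSingletonClass_of_map (m := (m' : Measure (CodeSpace unitInterval))) measurable_fst
  obtain ⟨νlim, symm_νlim, kShape_νlim⟩ :=
    exists_kShape_eq_couplingShape (m' : Measure (CodeSpace unitInterval)) μ'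
  refine ⟨φ, hφ, νlim, fun hsymm => symm_νlim (swap_μ' hsymm), fun k hk => ?_⟩
  obtain ⟨k, rfl⟩ := Nat.exists_eq_add_of_lt hk
  rw [zero_add, kShape_νlim]
  simp only [kShape_eq_couplingShape]
  exact tendsto_shape k

/-- compactness of s-convergence. Every sequence of s-graphons has a
subsequence and an s-graphon `ν` such that for every `k ∈ ℕ`, the `k`-shapes along the
subsequence converge to `C(ν,k)` in the Vietoris topology on compact subsets of `ℝ^{k×k}`. -/
theorem stmt15 (ν : ℕ → SGraphon) :
    ∃ φ : ℕ → ℕ, StrictMono φ ∧ ∃ νlim : SGraphon,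
      ∀ k : ℕ, 0 < k →
        VietorisTendsto (fun j => kShape (ν (φ j)).toMeasure k) (kShape νlim.toMeasure k) := by
  obtain ⟨φ, hφ, νlim, hsymm, hν⟩ := stmt15_general fun n => (ν n).1
  exact ⟨φ, hφ, ⟨νlim, hsymm fun n => (ν n).2⟩, hν⟩

end
end

section
/- Let μ be an s-graphon, let k ∈ ℕ, and let M ∈ M_k* be such that μ_M belongs to the shape C(μ). Then for every ε > 0 there exists a continuous fairly distributed function f ∈ FDC such that |Φ(f,μ)(I_i × I_j) − μ_M(I_i × I_j)| < ε for all i,j = 1,…,k, where I_i = [(i−1)/k, i/k) for i < k and I_k = [(k−1)/k, 1]. -/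
open MeasureTheory Topology Filter

noncomputable section

/-!
Weak convergence to `ν` is convergence on every set whose frontier is `ν`-null. The frontiers of the
grid cells are Lebesgue null and `μ_M` has a density, so membership of `μ_M` in the closure that
defines the shape already yields measures `Φ(f,μ)` close to `μ_M` on the finitely many cells.
-/

section NullFrontier

variable {X Y : Type*} [TopologicalSpace X] [TopologicalSpace Y] [MeasurableSpace X]
  [MeasurableSpace Y]

theorem null_frontier_preimage {μ : Measure X} {ν : Measure Y} {f : X → Y}
    (hf : Continuous f) (hμν : Measure.QuasiMeasurePreserving f μ ν) {s : Set Y}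
    (hs : ν (frontier s) = 0) : μ (frontier (f ⁻¹' s)) = 0 :=
  measure_mono_null (hf.frontier_preimage_subset s) (hμν.preimage_null hs)

theorem null_frontier_prod {μ : Measure X} {ν : Measure Y} {s : Set X} {t : Set Y}
    (hs : μ (frontier s) = 0) (ht : ν (frontier t) = 0) :
    μ.prod ν (frontier (s ×ˢ t)) = 0 :=
  null_frontier_inter
    (null_frontier_preimage continuous_fst Measure.quasiMeasurePreserving_fst hs)
    (null_frontier_preimage continuous_snd Measure.quasiMeasurePreserving_snd ht)

theorem eventually_forall_abs_measureReal_sub_lt [OpensMeasurableSpace X] [HasOuterApproxClosed X]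
    {α ι : Type*} [Finite ι] {l : Filter α} {μs : α → ProbabilityMeasure X}
    {μ : ProbabilityMeasure X} (hμs : Tendsto μs l (𝓝 μ)) {E : ι → Set X}
    (hE : ∀ i, (μ : Measure X) (frontier (E i)) = 0) {ε : ℝ} (hε : 0 < ε) :
    ∀ᶠ a in l, ∀ i, |(μs a : Measure X).real (E i) - (μ : Measure X).real (E i)| < ε := by
  refine eventually_all.2 fun i => ?_
  have tendsto_real : Tendsto (fun a => (μs a : Measure X).real (E i)) l
      (𝓝 ((μ : Measure X).real (E i))) :=
    (ENNReal.tendsto_toReal (measure_ne_top _ _)).comp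
      (ProbabilityMeasure.tendsto_measure_of_null_frontier_of_tendsto' hμs (hE i))
  exact Metric.tendsto_nhds.1 tendsto_real ε hε

end NullFrontier

theorem null_frontier_coe_preimage_of_convex {s : Set ℝ} (hs : Convex ℝ s) :
    volume (frontier (((↑) : unitInterval → ℝ) ⁻¹' s)) = 0 :=
  null_frontier_preimage continuous_subtype_val
    (unitInterval.measurePreserving_coe.quasiMeasurePreserving.mono_right
      Measure.restrict_le_self.absolutelyContinuous)
    (hs.addHaar_frontier volume)

theorem null_frontier_Ik (k : ℕ) (i : Fin k) : volume (frontier (Ik k i)) = 0 := by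
  unfold Ik
  split_ifs
  · exact null_frontier_coe_preimage_of_convex (convex_Icc _ _)
  · exact null_frontier_coe_preimage_of_convex (convex_Ico _ _)

theorem muM_absolutelyContinuous {k : ℕ} (M : Matrix (Fin k) (Fin k) ℝ) : muM M ≪ volume := by
  unfold muM
  split_ifs
  · exact withDensity_absolutelyContinuous _ _
  · exact Measure.AbsolutelyContinuous.zero _

theorem muM_null_frontier_Ik_prod_Ik {k : ℕ} (M : Matrix (Fin k) (Fin k) ℝ) (i j : Fin k) :
    muM M (frontier (Ik k i ×ˢ Ik k j)) = 0 :=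
  muM_absolutelyContinuous M
    (null_frontier_prod (null_frontier_Ik k i) (null_frontier_Ik k j))

theorem stmt16_general {μ : Measure Sq} {ν : SGraphon} (hν : ν ∈ shapeM μ) {ι : Type*} [Finite ι]
    {E : ι → Set Sq} (hE : ∀ i, ν.toMeasure (frontier (E i)) = 0) {ε : ℝ} (hε : 0 < ε) :
    ∃ f : Sq → ℝ, FairlyDistributed f ∧ Continuous f ∧
      ∀ i, |(PhiMeas f μ).real (E i) - ν.toMeasure.real (E i)| < ε := by
  have near : ∀ᶠ ρ in 𝓝 ν, ∀ i, |ρ.toMeasure.real (E i) - ν.toMeasure.real (E i)| < ε :=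
    eventually_forall_abs_measureReal_sub_lt continuous_subtype_val.continuousAt hE hε
  obtain ⟨ρ, ⟨f, hf, hf_cont, hρ⟩, hρν⟩ :=
    ((mem_closure_iff_frequently.1 hν).and_eventually near).exists
  exact ⟨f, hf, hf_cont, hρ ▸ hρν⟩

/-- If `M ∈ M_k^*` is such that `μ_M` belongs to the shape `C(μ)` of an
s-graphon `μ`, then for every `ε > 0` there is a continuous fairly distributed `f` with
`|Φ(f,μ)(I_i × I_j) − μ_M(I_i × I_j)| < ε` for all `i,j`. -/
theorem stmt16 (μ : SGraphon) (k : ℕ) (hk : 0 < k) (M : Matrix (Fin k) (Fin k) ℝ)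
    (hM : M ∈ Mstar k) (ν : SGraphon) (hν : ν.toMeasure = muM M) (hmem : ν ∈ shape μ)
    (ε : ℝ) (hε : 0 < ε) :
    ∃ f : Sq → ℝ, FairlyDistributed f ∧ Continuous f ∧
      ∀ i j : Fin k,
        |(PhiMeas f μ.toMeasure (Ik k i ×ˢ Ik k j)).toReal -
          (muM M (Ik k i ×ˢ Ik k j)).toReal| < ε := by
  obtain ⟨f, hf, hf_cont, hfν⟩ := stmt16_general hmem
    (E := fun p : Fin k × Fin k => Ik k p.1 ×ˢ Ik k p.2)
    (fun p => hν ▸ muM_null_frontier_Ik_prod_Ik M p.1 p.2) hε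
  exact ⟨f, hf, hf_cont, fun i j => hν ▸ hfν (i, j)⟩

end
end
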